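/- Let 𝓕 be a capturing construction scheme (of some type) and let 2 ≤ n. Then the poset ℙ_n (consisting of all finite P ⊆ ω₁ such that no ξ_0 < … < ξ_n in P are captured by 𝓕, ordered by reverse inclusion) is K_n: every uncountable subset of ℙ_n contains an uncountable n-linked subset. -/

import Mathlib

/-!
Cover each `p ∈ W` by some `F_p` in a level `k_p` of the scheme and record the *pattern* of `p`:
the level `k_p` and the set of positions of the elements of `p` in the increasing enumeration of
`F_p`. There are only countably many patterns, so uncountably many `p ∈ W` share one pattern, with
level `k` say. Any `n` members `p_0, …, p_{n-1}` of such a class have their union in `ℙ_n`.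

Indeed, suppose `F` of level `l` captures `ξ_0 < … < ξ_n` in the union. Everything rests on
`ConstructionScheme.mem_of_le`: if `E`, `G` have levels `l ≤ k` and share a point `α`, then `G`
contains all elements of `E` below `α`.

* If `k < l`, two of the `n + 1` points lie in the same `p_j`, hence in `F_{p_j}`, which has level at
  most `l - 1`. By `mem_of_le` they then lie in a common piece of the canonical decomposition of `F`,
  whereas captured points lie in different pieces, outside the root.
* If `l ≤ k`, let `ξ_n ∈ p_j`. By `mem_of_le` all `ξ_i` lie in `F_{p_j}`. If `ξ_i ∈ p_{j'}`, then `ξ_i`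
  occupies the same position in `F_{p_j}` and in `F_{p_{j'}}`, as these meet in a common initial
  segment; the patterns being equal, `ξ_i ∈ p_j` (`ConstructionScheme.mem_of_pattern_eq`). So
  `p_j ∈ ℙ_n` already contains the captured points, a contradiction.
-/

noncomputable section
open scoped Classical

/-- The first uncountable ordinal, `ω₁`. -/
def omega1 : Ordinal.{0} := (Cardinal.aleph 1).ord

/-- `ω₁` viewed as a linearly ordered type: the set of countable ordinals. -/
abbrev Omega1 := {o : Ordinal.{0} // o < omega1}

section Basic

variable {Ω : Type*} [LinearOrder Ω]

/-- `A ⊑ B` : `A` is an initial segment of `B` with respect to the order. -/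
def IsInitialSegment (A B : Finset Ω) : Prop :=
  A ⊆ B ∧ ∀ x ∈ B, ∀ y ∈ A, x ≤ y → x ∈ A

/-- The unique order preserving bijection from `E` onto `F` (meaningful when
`|E| = |F|`), extended by the identity off `E`. -/
def opMap (E F : Finset Ω) (x : Ω) : Ω :=
  if h : x ∈ E ∧ F.card = E.card then
    ((F.orderIsoOfFin h.2) ((E.orderIsoOfFin rfl).symm ⟨x, h.1⟩) : Ω)
  else x

/-- `A` is an interval of `B`: a set of consecutive elements of `B`. -/
def IsIntervalOf (A B : Finset Ω) : Prop :=
  A ⊆ B ∧ ∀ x ∈ A, ∀ z ∈ A, ∀ y ∈ B, x < y → y < z → y ∈ A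

end Basic

/-- A type `(m_k, n_k, r_k)_{k<ω}`: `m 0 = 1`, `r k < m (k-1)` and `k < n k` for `k ≥ 1`,
every value is attained by `r` infinitely often, and `m k = n k * (m (k-1) - r k) + r k`. -/
structure SchemeType where
  m : ℕ → ℕ
  n : ℕ → ℕ
  r : ℕ → ℕ
  m_zero : m 0 = 1
  r_lt_m : ∀ k, 1 ≤ k → r k < m (k - 1)
  k_lt_n : ∀ k, 1 ≤ k → k < n k
  r_infinitely_often : ∀ r' : ℕ, {k : ℕ | 1 ≤ k ∧ r k = r'}.Infinite
  m_rec : ∀ k, 1 ≤ k → m k = n k * (m (k - 1) - r k) + r k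

/-- A construction scheme of type `τ` on a linear order `Ω` (in the paper, `Ω = ω₁` or `Ω = ω`):
a family of finite subsets of `Ω` partitioned into levels, with a root `R(F) ⊑ F` of size `r k`
for every `F` in level `k`, which is cofinal in `[Ω]^{<ω}`, whose members at a common level
pairwise intersect in initial segments of both, and such that every `F` at level `k ≥ 1` has a
unique canonical decomposition `F = ⋃_{i < n k} Fᵢ` into level `k-1` members forming an
increasing Δ-system with root `R(F)`.  The canonical decomposition of `F` is `decomp F`. -/
structure ConstructionScheme (τ : SchemeType) (Ω : Type*) [LinearOrder Ω] where
  level : ℕ → Set (Finset Ω)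
  root : Finset Ω → Finset Ω
  decomp : Finset Ω → ℕ → Finset Ω
  cover : ∀ A : Finset Ω, ∃ k, ∃ F ∈ level k, A ⊆ F
  level_eq : ∀ k l F, F ∈ level k → F ∈ level l → k = l
  card_eq : ∀ k, ∀ F ∈ level k, F.card = τ.m k
  root_card : ∀ k, ∀ F ∈ level k, (root F).card = τ.r k
  root_initSeg : ∀ k, ∀ F ∈ level k, IsInitialSegment (root F) F
  inter_initSeg : ∀ k, ∀ E ∈ level k, ∀ F ∈ level k, IsInitialSegment (E ∩ F) E
  decomp_mem : ∀ k, 1 ≤ k → ∀ F ∈ level k, ∀ i < τ.n k, decomp F i ∈ level (k - 1)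
  decomp_union : ∀ k, 1 ≤ k → ∀ F ∈ level k,
    F = (Finset.range (τ.n k)).biUnion (decomp F)
  decomp_root : ∀ k, 1 ≤ k → ∀ F ∈ level k, ∀ i < τ.n k, ∀ j < τ.n k, i ≠ j →
    decomp F i ∩ decomp F j = root F
  decomp_increasing : ∀ k, 1 ≤ k → ∀ F ∈ level k, ∀ i j, i < j → j < τ.n k →
    ∀ x ∈ decomp F i \ root F, ∀ y ∈ decomp F j \ root F, x < y
  root_lt_decomp : ∀ k, 1 ≤ k → ∀ F ∈ level k, ∀ i < τ.n k,
    ∀ x ∈ root F, ∀ y ∈ decomp F i \ root F, x < y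
  decomp_unique : ∀ k, 1 ≤ k → ∀ F ∈ level k, ∀ G : ℕ → Finset Ω,
    (∀ i < τ.n k, G i ∈ level (k - 1)) →
    F = (Finset.range (τ.n k)).biUnion G →
    (∀ i < τ.n k, ∀ j < τ.n k, i ≠ j → G i ∩ G j = root F) →
    (∀ i j, i < j → j < τ.n k →
      ∀ x ∈ G i \ root F, ∀ y ∈ G j \ root F, x < y) →
    (∀ i < τ.n k, ∀ x ∈ root F, ∀ y ∈ G i \ root F, x < y) →
    ∀ i < τ.n k, G i = decomp F i

namespace ConstructionScheme

variable {τ : SchemeType} {Ω : Type*} [LinearOrder Ω]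

/-- The scheme `S` captures the finite Δ-system `t 0, …, t (n-1)` with root `ρ`:
there are `k ≥ 1` and `F ∈ 𝓕_k` with canonical decomposition `(Fᵢ)_{i<n_k}` such that
`ρ ⊆ R(F)`, `t i \ ρ ⊆ Fᵢ \ R(F)` and `φᵢ(t 0) = t i` for all `i < n`. -/
def CapturesFamily (S : ConstructionScheme τ Ω) (n : ℕ) (t : ℕ → Finset Ω)
    (ρ : Finset Ω) : Prop :=
  ∃ k, 1 ≤ k ∧ n ≤ τ.n k ∧ ∃ F ∈ S.level k,
    ρ ⊆ S.root F ∧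
    (∀ i < n, t i \ ρ ⊆ S.decomp F i \ S.root F) ∧
    (∀ i < n, (t 0).image (opMap (S.decomp F 0) (S.decomp F i)) = t i)

/-- The scheme `S` captures the points `ξ 0 < … < ξ (n-1)`: there are `k ≥ 1` and `F ∈ 𝓕_k`
with canonical decomposition `(Fᵢ)_{i<n_k}` such that `ξ i ∈ Fᵢ \ R(F)` and
`φᵢ(ξ 0) = ξ i` for all `i < n`. -/
def CapturesPoints (S : ConstructionScheme τ Ω) (n : ℕ) (ξ : ℕ → Ω) : Prop :=
  ∃ k, 1 ≤ k ∧ n ≤ τ.n k ∧ ∃ F ∈ S.level k,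
    ∀ i < n, ξ i ∈ S.decomp F i \ S.root F ∧
      opMap (S.decomp F 0) (S.decomp F i) (ξ 0) = ξ i

end ConstructionScheme

/-- `(s_ξ)_{ξ<ω₁}` is an (uncountable, increasing) Δ-system with root `ρ`:
`s α ∩ s β = ρ` and `max (s α \ ρ) < min (s β \ ρ)` whenever `α < β`. -/
def IsDeltaSystem (s : Omega1 → Finset Omega1) (ρ : Finset Omega1) : Prop :=
  ∀ α β : Omega1, α < β → s α ∩ s β = ρ ∧ ∀ x ∈ s α \ ρ, ∀ y ∈ s β \ ρ, x < y

namespace ConstructionScheme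

variable {τ : SchemeType}

/-- `S` is an `n`-capturing construction scheme: every uncountable Δ-system
`(s_ξ)_{ξ<ω₁}` with root `ρ` has `n` members `s_{ξ_0}, …, s_{ξ_{n-1}}` (with
`ξ_0 < … < ξ_{n-1}`) captured by `S`. -/
def IsNCapturing (S : ConstructionScheme τ Omega1) (n : ℕ) : Prop :=
  ∀ (s : Omega1 → Finset Omega1) (ρ : Finset Omega1), IsDeltaSystem s ρ →
    ∃ ξ : ℕ → Omega1, (∀ i j, i < j → j < n → ξ i < ξ j) ∧
      S.CapturesFamily n (fun i => s (ξ i)) ρ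

/-- `S` is capturing: `n`-capturing for every `n ≥ 2`. -/
def IsCapturing (S : ConstructionScheme τ Omega1) : Prop :=
  ∀ n, 2 ≤ n → S.IsNCapturing n

/-- The poset `ℙ_n`: finite `P ⊆ ω₁` such that no `ξ_0 < … < ξ_n` in `P` are captured
by the scheme, ordered by reverse inclusion. -/
def PosetP (S : ConstructionScheme τ Omega1) (n : ℕ) : Set (Finset Omega1) :=
  {P | ∀ ξ : ℕ → Omega1, (∀ i ≤ n, ξ i ∈ P) → (∀ i j, i < j → j ≤ n → ξ i < ξ j) →
    ¬ S.CapturesPoints (n + 1) ξ}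

end ConstructionScheme

namespace ConstructionScheme

variable {τ : SchemeType} {Ω : Type*} [LinearOrder Ω]

theorem exists_subset_level (S : ConstructionScheme τ Ω) {l k : ℕ} (hlk : l ≤ k)
    {G : Finset Ω} (hG : G ∈ S.level k) {α : Ω} (hα : α ∈ G) :
    ∃ E ∈ S.level l, α ∈ E ∧ E ⊆ G := by
  induction k, hlk using Nat.le_induction generalizing G with
  | base => exact ⟨G, hG, hα, subset_rfl⟩
  | succ k _ ih =>
    have hu := S.decomp_union (k + 1) (by omega) G hG
    have hα' := hα
    rw [hu, Finset.mem_biUnion] at hα'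
    obtain ⟨i, hi, hαi⟩ := hα'
    have hi' := Finset.mem_range.1 hi
    obtain ⟨E, hE, hαE, hEG⟩ :=
      ih (S.decomp_mem (k + 1) (by omega) G hG i hi') hαi
    refine ⟨E, hE, hαE, hEG.trans ?_⟩
    exact (Finset.subset_biUnion_of_mem (S.decomp G) hi).trans hu.ge

/-- Coherence of the levels: a member of level `k ≥ l` sharing a point `α` with a member of
level `l` contains all of the latter's elements up to `α`. -/
theorem mem_of_le (S : ConstructionScheme τ Ω) {l k : ℕ} (hlk : l ≤ k)
    {E G : Finset Ω} (hE : E ∈ S.level l) (hG : G ∈ S.level k) {α x : Ω}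
    (hαE : α ∈ E) (hαG : α ∈ G) (hx : x ∈ E) (hxα : x ≤ α) : x ∈ G := by
  obtain ⟨E', hE', hαE', hE'G⟩ := S.exists_subset_level hlk hG hαG
  exact hE'G (Finset.mem_inter.1 ((S.inter_initSeg l E hE E' hE').2 x hx α
    (Finset.mem_inter.2 ⟨hαE, hαE'⟩) hxα)).2

/-- The position of `x` in the increasing enumeration of `F`. -/
def position (F : Finset Ω) (x : Ω) : ℕ := (F.filter (· < x)).card

theorem position_lt {F : Finset Ω} {x y : Ω} (hx : x ∈ F) (hxy : x < y) :
    position F x < position F y := by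
  refine Finset.card_lt_card (Finset.ssubset_iff_of_subset ?_ |>.2 ⟨x, ?_, ?_⟩)
  · intro z hz
    rw [Finset.mem_filter] at hz ⊢
    exact ⟨hz.1, hz.2.trans hxy⟩
  · exact Finset.mem_filter.2 ⟨hx, hxy⟩
  · simp

theorem position_inj {F : Finset Ω} {x y : Ω} (hx : x ∈ F) (hy : y ∈ F)
    (h : position F x = position F y) : x = y := by
  rcases lt_trichotomy x y with hxy | hxy | hxy
  · exact absurd h (position_lt hx hxy).ne
  · exact hxy
  · exact absurd h (position_lt hy hxy).ne'

theorem position_eq (S : ConstructionScheme τ Ω) {k : ℕ} {F G : Finset Ω}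
    (hF : F ∈ S.level k) (hG : G ∈ S.level k) {x : Ω} (hxF : x ∈ F) (hxG : x ∈ G) :
    position F x = position G x := by
  unfold position
  congr 1
  ext z
  simp only [Finset.mem_filter]
  exact ⟨fun h => ⟨S.mem_of_le le_rfl hF hG hxF hxG h.1 h.2.le, h.2⟩,
    fun h => ⟨S.mem_of_le le_rfl hG hF hxG hxF h.1 h.2.le, h.2⟩⟩

/-- Two sets occupying the same positions in members of the same level agree on the common part
of these members. -/
theorem mem_of_pattern_eq (S : ConstructionScheme τ Ω) {k : ℕ} {F G p q : Finset Ω}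
    (hF : F ∈ S.level k) (hG : G ∈ S.level k) (hp : p ⊆ F) (hq : q ⊆ G)
    (h : p.image (position F) = q.image (position G)) {x : Ω} (hxF : x ∈ F) (hxq : x ∈ q) :
    x ∈ p := by
  have hx : position G x ∈ p.image (position F) := h ▸ Finset.mem_image_of_mem _ hxq
  obtain ⟨y, hy, hyx⟩ := Finset.mem_image.1 hx
  rw [← S.position_eq hF hG hxF (hq hxq)] at hyx
  exact position_inj (hp hy) hxF hyx ▸ hy

/-- A union of `n` members of `ℙ_n` with the same pattern is in `ℙ_n`. -/
theorem biUnion_mem_posetP (S : ConstructionScheme τ Omega1) {n k : ℕ}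
    (p F : Fin n → Finset Omega1) (hp : ∀ i, p i ∈ S.PosetP n)
    (hF : ∀ i, F i ∈ S.level k) (hpF : ∀ i, p i ⊆ F i)
    (hpat : ∀ i j, (p i).image (position (F i)) = (p j).image (position (F j))) :
    Finset.univ.biUnion p ∈ S.PosetP n := by
  rintro ξ hξ hlt ⟨l, hl, hn, G, hG, hcap⟩
  have hξ' : ∀ i : Fin (n + 1), ∃ j, ξ i ∈ p j := fun i => by
    simpa using hξ i (Nat.le_of_lt_succ i.2)
  choose J hJ using hξ'
  rcases Nat.lt_or_ge k l with hkl | hlk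
  · obtain ⟨a, b, hab, hJab⟩ := Fintype.exists_ne_map_eq_of_card_lt J (by simp)
    wlog h : a < b generalizing a b
    · exact this b a hab.symm hJab.symm (lt_of_le_of_ne (not_lt.1 h) hab.symm)
    have ha := Finset.mem_sdiff.1 (hcap a a.2).1
    have hb := Finset.mem_sdiff.1 (hcap b b.2).1
    have hab' : (a : ℕ) < b := h
    have hmem : ξ a ∈ S.decomp G b :=
      S.mem_of_le (by omega : k ≤ l - 1) (hF (J b))
        (S.decomp_mem l hl G hG b (b.2.trans_le hn)) (hpF _ (hJ b)) hb.1
        (hpF _ (hJab ▸ hJ a)) (hlt a b hab' (Nat.le_of_lt_succ b.2)).le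
    exact ha.2 (S.decomp_root l hl G hG a (a.2.trans_le hn) b (b.2.trans_le hn) hab'.ne ▸
      Finset.mem_inter.2 ⟨ha.1, hmem⟩)
  · have hsub : ∀ i ≤ n, ξ i ∈ G := fun i hi => by
      have hi' : i < n + 1 := Nat.lt_succ_of_le hi
      rw [S.decomp_union l hl G hG, Finset.mem_biUnion]
      exact ⟨i, Finset.mem_range.2 (hi'.trans_le hn),
        (Finset.mem_sdiff.1 (hcap i hi').1).1⟩
    have hlast : ξ n ∈ p (J (Fin.last n)) := hJ (Fin.last n)
    refine hp (J (Fin.last n)) ξ (fun i hi => ?_) hlt ⟨l, hl, hn, G, hG, hcap⟩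
    have hle : ξ i ≤ ξ n := by
      rcases hi.lt_or_eq with h | h
      · exact (hlt i n h le_rfl).le
      · rw [h]
    have hiF := S.mem_of_le hlk hG (hF (J (Fin.last n))) (hsub n le_rfl) (hpF _ hlast)
      (hsub i hi) hle
    exact S.mem_of_pattern_eq (hF _) (hF _) (hpF _) (hpF _) (hpat _ _) hiF
      (hJ ⟨i, Nat.lt_succ_of_le hi⟩)

end ConstructionScheme

/-- If `𝓕` is a capturing construction scheme and `n ≥ 2`, then `ℙ_n`
is `K_n`: every uncountable subset of `ℙ_n` has an uncountable `n`-linked subset. -/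
theorem posetP_Knaster {τ : SchemeType} (S : ConstructionScheme τ Omega1)
    (hcap : S.IsCapturing) (n : ℕ) (hn : 2 ≤ n)
    (W : Set (Finset Omega1)) (hW : W ⊆ S.PosetP n) (hunc : ¬ W.Countable) :
    ∃ W₀ ⊆ W, ¬ W₀.Countable ∧
      ∀ p : Fin n → Finset Omega1, (∀ i, p i ∈ W₀) →
        ∃ Q ∈ S.PosetP n, ∀ i, p i ⊆ Q := by
  choose k F hF hpF using S.cover
  let pat : Finset Omega1 → ℕ × Finset ℕ :=
    fun p => (k p, p.image (ConstructionScheme.position (F p)))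
  -- some pattern is shared by uncountably many members of `W`
  obtain ⟨c, hc⟩ : ∃ c, ¬ {p ∈ W | pat p = c}.Countable := by
    by_contra! h
    refine hunc ((Set.countable_iUnion h).mono fun p hp => ?_)
    exact Set.mem_iUnion.2 ⟨pat p, hp, rfl⟩
  refine ⟨{p ∈ W | pat p = c}, fun p hp => hp.1, hc, fun p hp => ?_⟩
  refine ⟨Finset.univ.biUnion p, ?_, fun i =>
    Finset.subset_biUnion_of_mem p (Finset.mem_univ i)⟩
  have hk : ∀ i, k (p i) = c.1 := fun i => congrArg Prod.fst (hp i).2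
  have himg : ∀ i, (p i).image (ConstructionScheme.position (F (p i))) = c.2 :=
    fun i => congrArg Prod.snd (hp i).2
  exact S.biUnion_mem_posetP (k := c.1) p (fun i => F (p i)) (fun i => hW (hp i).1)
    (fun i => hk i ▸ hF (p i)) (fun i => hpF (p i)) fun i j => (himg i).trans (himg j).symm
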